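/- arXiv:1904.02702 — 5 statements merged into one kernel-verified Lean document; each statement's English description precedes it below -/
import Mathlib

section
/- Let G, G_{v1}, G_{v2} : [0,T] → Mₙ(ℂ) be continuous and let U be the propagator of G, i.e., U(0) = I, U'(t) = G(t)·U(t) for all t ∈ [0,T], and U(t) invertible for every t. Write G̃_{vi}(s) = U(s)⁻¹·G_{vi}(s)·U(s) for i = 1,2, define W_i(t) = U(t)·∫₀ᵗ G̃_{vi}(s) ds, and define Y(t) = U(t)·∫₀ᵗ dt₁ ∫₀^{t₁} dt₂ (G̃_{v1}(t₁)·G̃_{v2}(t₂) + G̃_{v2}(t₁)·G̃_{v1}(t₂)). Then Y(0) = 0 and Y'(t) = G(t)·Y(t) + G_{v1}(t)·W₂(t) + G_{v2}(t)·W₁(t) for all t ∈ [0,T]. -/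
open MeasureTheory Set intervalIntegral

attribute [local instance] Matrix.linftyOpNormedAddCommGroup Matrix.linftyOpNormedRing
  Matrix.linftyOpNormedAlgebra

theorem aux_ftc {E : Type*} [NormedAddCommGroup E] [NormedSpace ℝ E] [CompleteSpace E]
    {T : ℝ} {f : ℝ → E} (hf : ContinuousOn f (Icc 0 T)) {t : ℝ} (ht : t ∈ Icc 0 T) :
    HasDerivWithinAt (fun u => ∫ s in (0 : ℝ)..u, f s) (f t) (Icc 0 T) t := by
  haveI : Fact (t ∈ Icc 0 T) := ⟨ht⟩
  refine integral_hasDerivWithinAt_right ?_ ?_ (hf t ht)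
  · apply ContinuousOn.intervalIntegrable
    rw [uIcc_of_le ht.1]
    exact hf.mono (Icc_subset_Icc_right ht.2)
  · exact hf.stronglyMeasurableAtFilter_nhdsWithin measurableSet_Icc t

theorem aux_inv {n : ℕ} {U : ℝ → Matrix (Fin n) (Fin n) ℂ} {S : Set ℝ} (hU : ContinuousOn U S)
    (hi : ∀ t ∈ S, IsUnit (U t)) : ContinuousOn (fun t => (U t)⁻¹) S := by
  intro t ht
  simp only [Matrix.nonsing_inv_eq_ringInverse]
  obtain ⟨u, hu⟩ := hi t ht
  have h := NormedRing.inverse_continuousAt u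
  rw [hu] at h
  exact ContinuousAt.comp_continuousWithinAt h (hU t ht)

/-- With `U` the propagator of `G`, `G̃ᵥᵢ s = U s⁻¹ Gᵥᵢ s U s`,
`Wᵢ t = U t ∫₀ᵗ G̃ᵥᵢ`, and the symmetrized second-order Dyson term
`Y t = U t ∫₀ᵗ dt₁ ∫₀^{t₁} dt₂ (G̃ᵥ₁(t₁) G̃ᵥ₂(t₂) + G̃ᵥ₂(t₁) G̃ᵥ₁(t₂))`, one has `Y 0 = 0` and
`Y' = G Y + Gᵥ₁ W₂ + Gᵥ₂ W₁`. -/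
theorem statement3 {n : ℕ} {T : ℝ} (hT : 0 < T)
    (G Gv1 Gv2 U W1 W2 Y : ℝ → Matrix (Fin n) (Fin n) ℂ)
    (hG : ContinuousOn G (Icc 0 T))
    (hGv1 : ContinuousOn Gv1 (Icc 0 T)) (hGv2 : ContinuousOn Gv2 (Icc 0 T))
    (hU0 : U 0 = 1)
    (hU : ∀ t ∈ Icc (0 : ℝ) T, HasDerivWithinAt U (G t * U t) (Icc 0 T) t)
    (hUinv : ∀ t ∈ Icc (0 : ℝ) T, IsUnit (U t))
    (hW1 : W1 = fun t => U t * ∫ s in (0 : ℝ)..t, (U s)⁻¹ * Gv1 s * U s)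
    (hW2 : W2 = fun t => U t * ∫ s in (0 : ℝ)..t, (U s)⁻¹ * Gv2 s * U s)
    (hY : Y = fun t => U t * ∫ t₁ in (0 : ℝ)..t,
      (((U t₁)⁻¹ * Gv1 t₁ * U t₁) * ∫ t₂ in (0 : ℝ)..t₁, (U t₂)⁻¹ * Gv2 t₂ * U t₂)
      + ((U t₁)⁻¹ * Gv2 t₁ * U t₁) * ∫ t₂ in (0 : ℝ)..t₁, (U t₂)⁻¹ * Gv1 t₂ * U t₂) :
    Y 0 = 0 ∧
    ∀ t ∈ Icc (0 : ℝ) T,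
      HasDerivWithinAt Y (G t * Y t + Gv1 t * W2 t + Gv2 t * W1 t) (Icc 0 T) t := by
  have hUc : ContinuousOn U (Icc 0 T) := fun t ht => (hU t ht).continuousWithinAt
  have hUi := aux_inv hUc hUinv
  have h1 : ContinuousOn (fun s => (U s)⁻¹ * Gv1 s * U s) (Icc 0 T) := (hUi.mul hGv1).mul hUc
  have h2 : ContinuousOn (fun s => (U s)⁻¹ * Gv2 s * U s) (Icc 0 T) := (hUi.mul hGv2).mul hUc
  have i1 : ContinuousOn (fun t => ∫ s in (0 : ℝ)..t, (U s)⁻¹ * Gv1 s * U s) (Icc 0 T) :=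
    fun t ht => (aux_ftc h1 ht).continuousWithinAt
  have i2 : ContinuousOn (fun t => ∫ s in (0 : ℝ)..t, (U s)⁻¹ * Gv2 s * U s) (Icc 0 T) :=
    fun t ht => (aux_ftc h2 ht).continuousWithinAt
  refine ⟨by rw [hY]; simp, fun t ht => ?_⟩
  have hd := (hU t ht).mul (aux_ftc ((h1.mul i2).add (h2.mul i1)) ht)
  have hc : U t * (U t)⁻¹ = 1 :=
    Matrix.mul_nonsing_inv _ ((Matrix.isUnit_iff_isUnit_det _).1 (hUinv t ht))
  have key : ∀ A B : Matrix (Fin n) (Fin n) ℂ,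
      U t * ((U t)⁻¹ * A * U t * B) = A * (U t * B) := by
    intro A B
    calc _ = (U t * (U t)⁻¹) * A * (U t * B) := by simp only [mul_assoc]
      _ = _ := by rw [hc, one_mul]
  rw [hY, hW1, hW2]
  refine hd.congr_deriv ?_
  simp only [Pi.add_apply, Pi.mul_apply, mul_add, key, mul_assoc (G t), add_assoc]
end

section
/- Let B_{i,j} : [0,T] → Mₙ(ℂ) be continuous for 1 ≤ i ≤ j ≤ m; for each i let U_i satisfy U_i(0) = I, U_i'(t) = B_{i,i}(t)·U_i(t), with U_i(t) invertible for every t. Suppose C_{i,j} : [0,T] → Mₙ(ℂ) satisfy C_{s,s+j}'(t) = Σ_{i=0}^{j} B_{s,s+i}(t)·C_{s+i,s+j}(t) with C_{s,s}(0) = I and C_{s,s+j}(0) = 0 for j ≥ 1. Then for all 1 ≤ s ≤ m and 1 ≤ j ≤ m−s and all t ∈ [0,T], C_{s,s+j}(t) = Int_{(s,s+j)}(t) + Σ_{i=1}^{j−1} U_s(t)·∫₀ᵗ U_s(t₁)⁻¹·B_{s,s+i}(t₁)·C_{s+i,s+j}(t₁) dt₁, where Int_{(s,s+j)}(t) = U_s(t)·∫₀ᵗ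 U_s(t₁)⁻¹·B_{s,s+j}(t₁)·U_{s+j}(t₁) dt₁. -/
open MeasureTheory Set intervalIntegral

attribute [local instance] Matrix.linftyOpNormedAddCommGroup Matrix.linftyOpNormedRing
  Matrix.linftyOpNormedAlgebra

theorem aux_variation {n : ℕ} {T : ℝ} (U X A F : ℝ → Matrix (Fin n) (Fin n) ℂ)
    (hU0 : U 0 = 1)
    (hU : ∀ t ∈ Icc (0 : ℝ) T, HasDerivWithinAt U (A t * U t) (Icc 0 T) t)
    (hUinv : ∀ t ∈ Icc (0 : ℝ) T, IsUnit (U t))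
    (hX : ∀ t ∈ Icc (0 : ℝ) T, HasDerivWithinAt X (A t * X t + F t) (Icc 0 T) t)
    (hF : ContinuousOn F (Icc 0 T)) :
    ContinuousOn (fun t => (U t)⁻¹) (Icc 0 T) ∧
    ∀ t ∈ Icc (0 : ℝ) T, X t = U t * (X 0 + ∫ τ in (0 : ℝ)..t, (U τ)⁻¹ * F τ) := by
  have : CompleteSpace (Matrix (Fin n) (Fin n) ℂ) := FiniteDimensional.complete ℂ _
  have hI : ∀ t ∈ Icc (0 : ℝ) T, HasDerivWithinAt (fun t => (U t)⁻¹)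
      (-((U t)⁻¹ * A t)) (Icc 0 T) t := by
    intro t ht
    obtain ⟨u, hu⟩ := hUinv t ht
    have h1 := hasFDerivAt_ringInverse (𝕜 := ℝ) u
    rw [hu] at h1
    have h2 := h1.comp_hasDerivWithinAt t (hU t ht)
    have e : (fun t => (U t)⁻¹) = Ring.inverse ∘ U := by
      funext s
      simp [Matrix.nonsing_inv_eq_ringInverse]
    rw [e]
    have e3 : (U t)⁻¹ = (↑u⁻¹ : Matrix (Fin n) (Fin n) ℂ) := by
      rw [← hu, Matrix.coe_units_inv]
    have e4 : -((U t)⁻¹ * A t) = -((↑u⁻¹ : Matrix (Fin n) (Fin n) ℂ) * (A t * U t) *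
        (↑u⁻¹ : Matrix (Fin n) (Fin n) ℂ)) := by
      rw [e3, ← hu]
      simp only [mul_assoc, Units.mul_inv, mul_one]
    rw [e4]
    exact h2
  have hIc : ContinuousOn (fun t => (U t)⁻¹) (Icc 0 T) :=
    fun t ht => (hI t ht).continuousWithinAt
  refine ⟨hIc, fun t ht => ?_⟩
  have hW : ∀ s ∈ Icc (0 : ℝ) T, HasDerivWithinAt (fun t => (U t)⁻¹ * X t)
      ((U s)⁻¹ * F s) (Icc 0 T) s := by
    intro s hs
    have := (hI s hs).mul (hX s hs)
    have e : (U s)⁻¹ * F s = -((U s)⁻¹ * A s) * X s + (U s)⁻¹ * (A s * X s + F s) := by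
      noncomm_ring
    rw [e]
    exact this
  have hsub : Icc 0 t ⊆ Icc 0 T := Icc_subset_Icc_right ht.2
  have hint := intervalIntegral.integral_eq_sub_of_hasDerivAt_of_le ht.1
    (f := fun t => (U t)⁻¹ * X t) (f' := fun s => (U s)⁻¹ * F s)
    (fun s hs => ((hW s (hsub hs)).continuousWithinAt).mono hsub)
    (fun s hs => (hW s (hsub (Ioo_subset_Icc_self hs))).hasDerivAt
      (Icc_mem_nhds hs.1 (hs.2.trans_le ht.2)))
    (ContinuousOn.intervalIntegrable (by
      rw [uIcc_of_le ht.1]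
      exact (hIc.mul hF).mono hsub))
  rw [hint, hU0]
  have hdet := (Matrix.isUnit_iff_isUnit_det _).1 (hUinv t ht)
  simp [Matrix.mul_nonsing_inv_cancel_left _ _ hdet]

/-- recursive form of Theorem 1. If the blocks `C i j` solve the coupled
block system of the upper-triangular IVP, with `U i` the (invertible) propagator of `B i i`,
then for `p < q`,
`C p q t = U p t ∫₀ᵗ (U p)⁻¹ B p q U q + ∑_{p < k < q} U p t ∫₀ᵗ (U p)⁻¹ B p k (C k q)`. -/
theorem statement8 {m n : ℕ} {T : ℝ} (hT : 0 < T)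
    (B C : Fin m → Fin m → ℝ → Matrix (Fin n) (Fin n) ℂ)
    (U : Fin m → ℝ → Matrix (Fin n) (Fin n) ℂ)
    (hB : ∀ i j : Fin m, i ≤ j → ContinuousOn (B i j) (Icc 0 T))
    (hU0 : ∀ i, U i 0 = 1)
    (hU : ∀ i, ∀ t ∈ Icc (0 : ℝ) T,
      HasDerivWithinAt (U i) (B i i t * U i t) (Icc 0 T) t)
    (hUinv : ∀ i, ∀ t ∈ Icc (0 : ℝ) T, IsUnit (U i t))
    (hC0diag : ∀ i : Fin m, C i i 0 = 1)
    (hC0 : ∀ i j : Fin m, i < j → C i j 0 = 0)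
    (hCsys : ∀ i j : Fin m, i ≤ j → ∀ t ∈ Icc (0 : ℝ) T,
      HasDerivWithinAt (C i j) (∑ k ∈ Finset.Icc i j, B i k t * C k j t) (Icc 0 T) t) :
    ∀ p q : Fin m, p < q → ∀ t ∈ Icc (0 : ℝ) T,
      C p q t =
        U p t * (∫ τ in (0 : ℝ)..t, (U p τ)⁻¹ * B p q τ * U q τ) +
        ∑ k ∈ Finset.Ioo p q,
          U p t * ∫ τ in (0 : ℝ)..t, (U p τ)⁻¹ * B p k τ * C k q τ := by
  intro p q hpq t ht
  have hCc : ∀ i j : Fin m, i ≤ j → ContinuousOn (C i j) (Icc 0 T) :=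
    fun i j hij s hs => (hCsys i j hij s hs).continuousWithinAt
  have hdiag : ∀ s ∈ Icc (0 : ℝ) T, C q q s = U q s := by
    intro s hs
    have := (aux_variation (U q) (C q q) (B q q) (fun _ => 0) (hU0 q) (hU q) (hUinv q)
      (fun t ht => by simpa using hCsys q q le_rfl t ht) continuousOn_const).2 s hs
    simpa [hC0diag] using this
  have hterm : ∀ k ∈ Finset.Ioc p q, ContinuousOn (fun t => B p k t * C k q t) (Icc 0 T) := by
    intro k hk
    rw [Finset.mem_Ioc] at hk
    exact (hB p k hk.1.le).mul (hCc k q hk.2)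
  obtain ⟨hIc, hmain⟩ := aux_variation (U p) (C p q) (B p p)
    (fun t => ∑ k ∈ Finset.Ioc p q, B p k t * C k q t) (hU0 p) (hU p) (hUinv p)
    (fun t ht => by
      have := hCsys p q hpq.le t ht
      rwa [← Finset.Ioc_insert_left hpq.le, Finset.sum_insert (by simp)] at this)
    (continuousOn_finsetSum _ hterm)
  have hsub : Icc 0 t ⊆ Icc 0 T := Icc_subset_Icc_right ht.2
  rw [hmain t ht, hC0 p q hpq, zero_add]
  simp only [Finset.mul_sum]
  rw [intervalIntegral.integral_finsetSum]
  · rw [← Finset.Ioo_insert_right hpq, Finset.sum_insert (by simp), mul_add, Finset.mul_sum]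
    simp only [mul_assoc]
    congr 2
    apply intervalIntegral.integral_congr
    intro s hs
    rw [uIcc_of_le ht.1] at hs
    simp only [hdiag s (hsub hs)]
  · intro k hk
    apply ContinuousOn.intervalIntegrable
    rw [uIcc_of_le ht.1]
    exact (hIc.mul (hterm k hk)).mono hsub
end

section
/- Let B_{i,j} : [0,T] → Mₙ(ℂ) be continuous for 1 ≤ i ≤ j ≤ m; for each i let U_i satisfy U_i(0) = I, U_i'(t) = B_{i,i}(t)·U_i(t), with U_i(t) invertible for every t. For s ≥ 2 and indices i₁, …, i_s define Int_{(i₁,…,i_s)}(t) = U_{i₁}(t)·∫₀ᵗ dt₁ ∫₀^{t₁} dt₂ ⋯ ∫₀^{t_{s−2}} dt_{s−1} U_{i₁}(t₁)⁻¹B_{i₁,i₂}(t₁)U_{i₂}(t₁) ⋯ U_{i_{s−1}}(t_{s−1})⁻¹B_{i_{s−1},i_s}(t_{s−1})U_{i_s}(t_{s−1}), and set Int_{(i)}(t) = U_i(t). Suppose C_{i,j} : [0,T] → Mₙ(ℂ) satisfy C_{s,s+j}'(t) = Σ_{i=0}^{j} B_{s,s+i}(t)·C_{s+i,s+j}(t)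 with C_{s,s}(0) = I and C_{s,s+j}(0) = 0 for j ≥ 1. Then for all 1 ≤ s ≤ m, 1 ≤ j ≤ m−s, and t ∈ [0,T]: C_{s,s+j}(t) = Int_{(s,s+j)}(t) + Σ_{r=1}^{j−1} Σ_{s < i₁ < ⋯ < i_r < s+j} Int_{(s,i₁,…,i_r,s+j)}(t), where the inner sum runs over all strictly increasing tuples of integers i₁ < ⋯ < i_r strictly between s and s+j. -/
open MeasureTheory Set intervalIntegral

attribute [local instance] Matrix.linftyOpNormedAddCommGroup Matrix.linftyOpNormedRing
  Matrix.linftyOpNormedAlgebra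

/-- The iterated (time-ordered simplex) integral
`nestedInt [M₁, …, M_k] t = ∫₀ᵗ dt₁ M₁(t₁) ∫₀^{t₁} dt₂ M₂(t₂) ⋯ ∫₀^{t_{k-1}} dt_k M_k(t_k)`. -/
noncomputable def nestedInt {n : ℕ} :
    List (ℝ → Matrix (Fin n) (Fin n) ℂ) → ℝ → Matrix (Fin n) (Fin n) ℂ
  | [] => fun _ => 1
  | M :: Ms => fun t => ∫ τ in (0 : ℝ)..t, M τ * nestedInt Ms τ

/-- `intTuple B U [i₁, …, i_s] t` is the nested integral
`Int_{(i₁,…,i_s)}(t) = U_{i₁}(t) ∫₀ᵗ dt₁ ⋯ ∫₀^{t_{s-2}} dt_{s-1}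
U_{i₁}⁻¹B_{i₁,i₂}U_{i₂}(t₁) ⋯ U_{i_{s-1}}⁻¹B_{i_{s-1},i_s}U_{i_s}(t_{s-1})`,
with `Int_{(i)}(t) = U_i(t)`. -/
noncomputable def intTuple {m n : ℕ}
    (B : Fin m → Fin m → ℝ → Matrix (Fin n) (Fin n) ℂ)
    (U : Fin m → ℝ → Matrix (Fin n) (Fin n) ℂ) :
    List (Fin m) → ℝ → Matrix (Fin n) (Fin n) ℂ
  | [] => fun _ => 1
  | i :: l => fun t =>
      U i t * nestedInt
        (((i :: l).zip l).map fun p => fun τ => (U p.1 τ)⁻¹ * B p.1 p.2 τ * U p.2 τ) t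

/-- Variation of constants in a Banach algebra. -/
theorem duhamel_aux {A : Type*} [NormedRing A] [NormedAlgebra ℝ A] [CompleteSpace A] {T : ℝ}
    (U b C F : ℝ → A) (hU0 : U 0 = 1)
    (hU : ∀ t ∈ Icc (0 : ℝ) T, HasDerivWithinAt U (b t * U t) (Icc 0 T) t)
    (hUinv : ∀ t ∈ Icc (0 : ℝ) T, IsUnit (U t))
    (hC : ∀ t ∈ Icc (0 : ℝ) T, HasDerivWithinAt C (b t * C t + F t) (Icc 0 T) t)
    (hF : ContinuousOn F (Icc 0 T)) (t : ℝ) (ht : t ∈ Icc (0 : ℝ) T) :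
    C t = U t * (C 0 + ∫ τ in (0 : ℝ)..t, Ring.inverse (U τ) * F τ) := by
  have hd : ∀ t ∈ Icc (0 : ℝ) T, HasDerivWithinAt (fun τ => Ring.inverse (U τ))
      (-(Ring.inverse (U t) * b t)) (Icc 0 T) t := by
    intro t ht
    obtain ⟨u, hu⟩ := hUinv t ht
    have h1 := hasFDerivAt_ringInverse (𝕜 := ℝ) u
    rw [hu] at h1
    have h2 := h1.comp_hasDerivWithinAt t (hU t ht)
    refine h2.congr_deriv ?_
    simp only [neg_apply, ContinuousLinearMap.mulLeftRight_apply]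
    rw [← hu, Ring.inverse_unit]
    simp [mul_assoc]
  have hV : ContinuousOn (fun τ => Ring.inverse (U τ)) (Icc 0 T) :=
    fun x hx => (hd x hx).continuousWithinAt
  have hW : ∀ t ∈ Icc (0 : ℝ) T, HasDerivWithinAt (fun τ => Ring.inverse (U τ) * C τ)
      (Ring.inverse (U t) * F t) (Icc 0 T) t := by
    intro t ht
    refine ((hd t ht).mul (hC t ht)).congr_deriv ?_
    noncomm_ring
  have hsub : Icc 0 t ⊆ Icc 0 T := Icc_subset_Icc_right ht.2
  have key := integral_eq_sub_of_hasDeriv_right_of_le (a := 0) (b := t)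
    (f := fun τ => Ring.inverse (U τ) * C τ) (f' := fun τ => Ring.inverse (U τ) * F τ) ht.1
    (fun x hx => ((hW x (hsub hx)).continuousWithinAt).mono hsub)
    (fun x hx => ((hW x (hsub (Ioo_subset_Icc_self hx))).hasDerivAt
      (Icc_mem_nhds hx.1 (hx.2.trans_le ht.2))).hasDerivWithinAt)
    (ContinuousOn.intervalIntegrable_of_Icc ht.1 ((hV.mul hF).mono hsub))
  rw [key]
  simp only [hU0, Ring.inverse_one, one_mul, add_sub_cancel]
  rw [← mul_assoc, Ring.mul_inverse_cancel _ (hUinv t ht), one_mul]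

/-- Exchanging a finite sum and an integral, for continuous integrands. -/
theorem integral_sum_aux {A ι : Type*} [NormedAddCommGroup A] [NormedSpace ℝ A] {T t : ℝ}
    (ht : t ∈ Icc (0 : ℝ) T) (s : Finset ι) (f : ι → ℝ → A)
    (hf : ∀ i ∈ s, ContinuousOn (f i) (Icc 0 T)) :
    ∫ τ in (0 : ℝ)..t, ∑ i ∈ s, f i τ = ∑ i ∈ s, ∫ τ in (0 : ℝ)..t, f i τ :=
  intervalIntegral.integral_finsetSum fun i hi =>
    ContinuousOn.intervalIntegrable_of_Icc ht.1 ((hf i hi).mono (Icc_subset_Icc_right ht.2))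

/-- Splitting a sum over subsets according to the smallest element. -/
theorem sum_powerset_min_aux {α M : Type*} [LinearOrder α] [AddCommMonoid M] (s : Finset α)
    (f : List α → M) :
    ∑ S ∈ s.powerset, f (S.sort (· ≤ ·)) =
      f [] + ∑ k ∈ s, ∑ S ∈ (s.filter (fun x => k < x)).powerset, f (k :: S.sort (· ≤ ·)) := by
  induction s using Finset.induction_on_min with
  | empty => simp
  | insert a s ha ih =>
    have has : a ∉ s := fun h => lt_irrefl _ (ha a h)
    rw [Finset.sum_powerset_insert has, ih, Finset.sum_insert has]
    have e1 : (insert a s).filter (fun x => a < x) = s := by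
      ext x
      simp only [Finset.mem_filter, Finset.mem_insert]
      constructor
      · rintro ⟨rfl | h, h'⟩
        · exact absurd h' (lt_irrefl _)
        · exact h
      · exact fun h => ⟨Or.inr h, ha x h⟩
    have e2 : ∀ k ∈ s, (insert a s).filter (fun x => k < x) = s.filter (fun x => k < x) := by
      intro k hk
      rw [Finset.filter_insert, if_neg (not_lt.2 (ha k hk).le)]
    rw [e1, add_assoc]
    congr 1
    rw [add_comm]
    congr 1
    · refine Finset.sum_congr rfl fun S hS => ?_
      rw [Finset.mem_powerset] at hS
      rw [Finset.sort_insert _ (fun b hb => (ha b (hS hb)).le) (fun h => has (hS h))]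
    · refine Finset.sum_congr rfl fun k hk => ?_
      rw [e2 k hk]

theorem intTuple_cons_cons_aux {m n : ℕ} (B : Fin m → Fin m → ℝ → Matrix (Fin n) (Fin n) ℂ)
    (U : Fin m → ℝ → Matrix (Fin n) (Fin n) ℂ) (p k : Fin m) (l : List (Fin m)) (t : ℝ) :
    intTuple B U (p :: k :: l) t =
      U p t * ∫ τ in (0 : ℝ)..t, (U p τ)⁻¹ * (B p k τ * intTuple B U (k :: l) τ) := by
  simp only [intTuple, List.zip_cons_cons, List.map_cons, nestedInt, mul_assoc]

theorem continuousOn_intTuple_aux {m n : ℕ} {T : ℝ} (hT : 0 < T)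
    (B : Fin m → Fin m → ℝ → Matrix (Fin n) (Fin n) ℂ)
    (U : Fin m → ℝ → Matrix (Fin n) (Fin n) ℂ)
    (hB : ∀ i j : Fin m, i ≤ j → ContinuousOn (B i j) (Icc 0 T))
    (hU : ∀ i, ContinuousOn (U i) (Icc 0 T))
    (hV : ∀ i, ContinuousOn (fun t => (U i t)⁻¹) (Icc 0 T)) :
    ∀ (l : List (Fin m)) (p : Fin m), (p :: l).Pairwise (· ≤ ·) →
      ContinuousOn (intTuple B U (p :: l)) (Icc 0 T) := by
  intro l
  induction l with
  | nil =>
    intro p _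
    have : intTuple B U [p] = U p := by
      funext t; simp [intTuple, nestedInt]
    rw [this]
    exact hU p
  | cons k l ih =>
    intro p h
    have e : intTuple B U (p :: k :: l) = fun t => U p t * ∫ τ in (0 : ℝ)..t,
        (U p τ)⁻¹ * (B p k τ * intTuple B U (k :: l) τ) := by
      funext t; exact intTuple_cons_cons_aux B U p k l t
    rw [e]
    have hpk : p ≤ k := (List.pairwise_cons.1 h).1 k (by simp)
    refine (hU p).mul ?_
    have hc := (hV p).mul ((hB p k hpk).mul (ih k (List.pairwise_cons.1 h).2))
    have := continuousOn_primitive_interval (a := 0) (b := T) (μ := volume)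
      (f := fun τ => (U p τ)⁻¹ * (B p k τ * intTuple B U (k :: l) τ))
      (by rw [uIcc_of_le hT.le]; exact hc.integrableOn_Icc)
    rwa [uIcc_of_le hT.le] at this

/-- explicit form of Theorem 1. If the blocks `C i j` solve the coupled
block system of the upper-triangular IVP, with `U i` the (invertible) propagator of `B i i`,
then for `p < q`,
`C p q t = Int_{(p,q)}(t) + ∑_{r=1}^{q-p-1} ∑_{p < i₁ < ⋯ < i_r < q} Int_{(p,i₁,…,i_r,q)}(t)`,
the inner sum ranging over all strictly increasing `r`-tuples strictly between `p` and `q`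
(identified with `r`-element subsets of the open interval, listed in increasing order). -/
theorem statement9 {m n : ℕ} {T : ℝ} (hT : 0 < T)
    (B C : Fin m → Fin m → ℝ → Matrix (Fin n) (Fin n) ℂ)
    (U : Fin m → ℝ → Matrix (Fin n) (Fin n) ℂ)
    (hB : ∀ i j : Fin m, i ≤ j → ContinuousOn (B i j) (Icc 0 T))
    (hU0 : ∀ i, U i 0 = 1)
    (hU : ∀ i, ∀ t ∈ Icc (0 : ℝ) T,
      HasDerivWithinAt (U i) (B i i t * U i t) (Icc 0 T) t)
    (hUinv : ∀ i, ∀ t ∈ Icc (0 : ℝ) T, IsUnit (U i t))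
    (hC0diag : ∀ i : Fin m, C i i 0 = 1)
    (hC0 : ∀ i j : Fin m, i < j → C i j 0 = 0)
    (hCsys : ∀ i j : Fin m, i ≤ j → ∀ t ∈ Icc (0 : ℝ) T,
      HasDerivWithinAt (C i j) (∑ k ∈ Finset.Icc i j, B i k t * C k j t) (Icc 0 T) t) :
    ∀ p q : Fin m, p < q → ∀ t ∈ Icc (0 : ℝ) T,
      C p q t =
        intTuple B U [p, q] t +
        ∑ r ∈ Finset.Icc 1 ((q : ℕ) - (p : ℕ) - 1),
          ∑ S ∈ Finset.powersetCard r (Finset.Ioo p q),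
            intTuple B U (p :: (S.sort (· ≤ ·) ++ [q])) t := by
  have hUc : ∀ i, ContinuousOn (U i) (Icc 0 T) := fun i x hx => (hU i x hx).continuousWithinAt
  have hV : ∀ i, ContinuousOn (fun t => (U i t)⁻¹) (Icc 0 T) := by
    intro i x hx
    simp only [Matrix.nonsing_inv_eq_ringInverse]
    obtain ⟨u, hu⟩ := hUinv i x hx
    have h := NormedRing.inverse_continuousAt u
    rw [hu] at h
    exact h.comp_continuousWithinAt (hUc i x hx)
  have hCc : ∀ i j, i ≤ j → ContinuousOn (C i j) (Icc 0 T) :=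
    fun i j hij x hx => (hCsys i j hij x hx).continuousWithinAt
  -- integral equation
  have hint : ∀ p q : Fin m, p ≤ q → ∀ t ∈ Icc (0 : ℝ) T,
      C p q t = U p t * (C p q 0 + ∫ τ in (0 : ℝ)..t,
        (U p τ)⁻¹ * ∑ k ∈ Finset.Ioc p q, B p k τ * C k q τ) := by
    intro p q hpq t ht
    simp only [Matrix.nonsing_inv_eq_ringInverse]
    refine duhamel_aux (U p) (B p p) (C p q) (fun τ => ∑ k ∈ Finset.Ioc p q, B p k τ * C k q τ)
      (hU0 p) (hU p) (hUinv p) ?_ ?_ t ht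
    · intro t ht
      refine (hCsys p q hpq t ht).congr_deriv ?_
      rw [← Finset.Ioc_insert_left hpq, Finset.sum_insert (by simp)]
    · refine continuousOn_finsetSum _ fun k hk => ?_
      rw [Finset.mem_Ioc] at hk
      exact (hB p k hk.1.le).mul (hCc k q hk.2)
  have hdiag : ∀ q : Fin m, ∀ t ∈ Icc (0 : ℝ) T, C q q t = intTuple B U [q] t := by
    intro q t ht
    rw [hint q q le_rfl t ht]
    simp [hC0diag, intTuple, nestedInt]
  have hsort : ∀ (p q : Fin m) (S : Finset (Fin m)), p < q → S ⊆ Finset.Ioo p q →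
      (p :: (S.sort (· ≤ ·) ++ [q])).Pairwise (· ≤ ·) := by
    intro p q S hpq hS
    have hm : ∀ x ∈ S, p ≤ x ∧ x ≤ q := fun x hx =>
      ⟨(Finset.mem_Ioo.1 (hS hx)).1.le, (Finset.mem_Ioo.1 (hS hx)).2.le⟩
    rw [List.pairwise_cons, List.pairwise_append]
    refine ⟨?_, Finset.pairwise_sort _ _, by simp, ?_⟩
    · intro x hx
      simp only [List.mem_append, Finset.mem_sort, List.mem_singleton] at hx
      rcases hx with hx | rfl
      · exact (hm x hx).1
      · exact hpq.le
    · intro x hx y hy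
      simp only [Finset.mem_sort, List.mem_singleton] at hx hy
      subst hy
      exact (hm x hx).2
  have hIc := continuousOn_intTuple_aux hT B U hB hUc hV
  have hmain : ∀ q p : Fin m, p < q → ∀ t ∈ Icc (0 : ℝ) T,
      C p q t = ∑ S ∈ (Finset.Ioo p q).powerset,
        intTuple B U (p :: (S.sort (· ≤ ·) ++ [q])) t := by
    intro q p
    induction p using WellFoundedGT.induction with
    | ind p ih =>
    intro hpq t ht
    have hsub : Icc 0 t ⊆ Icc 0 T := Icc_subset_Icc_right ht.2
    rw [hint p q hpq.le t ht, hC0 p q hpq, zero_add]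
    simp only [Finset.mul_sum]
    rw [integral_sum_aux ht _ _ (fun k hk => (by
      rw [Finset.mem_Ioc] at hk
      exact (hV p).mul ((hB p k hk.1.le).mul (hCc k q hk.2))))]
    rw [← Finset.Ioo_insert_right hpq, Finset.sum_insert (by simp), mul_add,
      sum_powerset_min_aux (Finset.Ioo p q)
        (fun l => intTuple B U (p :: (l ++ [q])) t), Finset.mul_sum]
    congr 1
    · rw [List.nil_append, intTuple_cons_cons_aux]
      congr 1
      refine intervalIntegral.integral_congr fun τ hτ => ?_
      rw [uIcc_of_le ht.1] at hτ
      simp only [hdiag q τ (hsub hτ)]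
    · refine Finset.sum_congr rfl fun k hk => ?_
      rw [Finset.mem_Ioo] at hk
      have e : (Finset.Ioo p q).filter (fun x => k < x) = Finset.Ioo k q := by
        ext x
        simp only [Finset.mem_filter, Finset.mem_Ioo]
        exact ⟨fun h => ⟨h.2, h.1.2⟩, fun h => ⟨⟨hk.1.trans h.1, h.2⟩, h.1⟩⟩
      rw [e]
      simp only [List.cons_append, intTuple_cons_cons_aux]
      rw [← Finset.mul_sum]
      congr 1
      rw [← integral_sum_aux ht _ _ (fun S hS => (by
        rw [Finset.mem_powerset] at hS
        exact (hV p).mul ((hB p k hk.1.le).mul (hIc _ _ (hsort k q S hk.2 hS)))))]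
      refine intervalIntegral.integral_congr fun τ hτ => ?_
      rw [uIcc_of_le ht.1] at hτ
      simp only [ih k hk.1 hk.2 τ (hsub hτ), Finset.mul_sum]
  intro p q hpq t ht
  rw [hmain q p hpq t ht, Finset.sum_powerset, Fin.card_Ioo, Finset.sum_range_succ',
    add_comm]
  congr 1
  · simp
  · rw [Finset.range_eq_Ico, Finset.sum_Ico_add' (fun r =>
      ∑ S ∈ Finset.powersetCard r (Finset.Ioo p q),
        intTuple B U (p :: (S.sort (· ≤ ·) ++ [q])) t)]
    refine Finset.sum_congr ?_ fun _ _ => rfl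
    ext x
    simp only [Finset.mem_Ico, Finset.mem_Icc]
    omega
end

section
/- Let B_{i,j} : [0,T] → Mₙ(ℂ) be continuous for 1 ≤ i ≤ j ≤ m; for each i let U_i satisfy U_i(0) = I, U_i'(t) = B_{i,i}(t)·U_i(t), with U_i(t) invertible for every t, and define Int_{(i₁,…,i_s)} as the nested integral Int_{(i₁,…,i_s)}(t) = U_{i₁}(t)·∫₀ᵗ dt₁ ⋯ ∫₀^{t_{s−2}} dt_{s−1} U_{i₁}(t₁)⁻¹B_{i₁,i₂}(t₁)U_{i₂}(t₁) ⋯ U_{i_{s−1}}(t_{s−1})⁻¹B_{i_{s−1},i_s}(t_{s−1})U_{i_s}(t_{s−1}), with Int_{(i)}(t) = U_i(t). For each pair (p, p+q) define C_{p,p+q}(t) = Int_{(p,p+q)}(t) + Σ_{r=1}^{q−1} Σ_{p < i₁ < ⋯ < i_r < p+q} Int_{(p,i₁,…,i_r,p+q)}(t) for q ≥ 1. Then for all 1 ≤ s ≤ m and all j ≥ 2 with s + j ≤ m, the identity Σ_{r=1}^{j−1} Σ_{s < i₁ < ⋯ < i_r < s+j} Int_{(s,i₁,…,i_r,s+j)}(t)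 = Σ_{i=1}^{j−1} U_s(t)·∫₀ᵗ U_s(t₁)⁻¹·B_{s,s+i}(t₁)·C_{s+i,s+j}(t₁) dt₁ holds for all t ∈ [0,T]. -/
open MeasureTheory Set intervalIntegral

attribute [local instance] Matrix.linftyOpNormedAddCommGroup Matrix.linftyOpNormedRing
  Matrix.linftyOpNormedAlgebra

theorem primitive_continuousOn_aux {E : Type*} [NormedAddCommGroup E] [NormedSpace ℝ E]
    {T : ℝ} (hT : 0 < T) (f : ℝ → E) (h1 : ContinuousOn f (Icc 0 T)) :
    ContinuousOn (fun t => ∫ τ in (0 : ℝ)..t, f τ) (Icc 0 T) := by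
  have h2 : IntegrableOn f (Set.uIcc 0 T) volume := by
    rw [Set.uIcc_of_le hT.le]
    exact h1.integrableOn_compact isCompact_Icc
  have h3 := intervalIntegral.continuousOn_primitive_interval h2
  rw [Set.uIcc_of_le hT.le] at h3
  exact h3

theorem nestedInt_continuousOn {n : ℕ} {T : ℝ} (hT : 0 < T)
    (L : List (ℝ → Matrix (Fin n) (Fin n) ℂ))
    (h : ∀ M ∈ L, ContinuousOn M (Icc 0 T)) : ContinuousOn (nestedInt L) (Icc 0 T) := by
  induction L with
  | nil => exact continuousOn_const
  | cons M Ms ih =>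
    have h1 : ContinuousOn (fun τ => M τ * nestedInt Ms τ) (Icc 0 T) :=
      (h M (by simp)).mul (ih fun M' hM' => h M' (by simp [hM']))
    exact primitive_continuousOn_aux hT _ h1

theorem inv_continuousOn {n : ℕ} {T : ℝ} (U : ℝ → Matrix (Fin n) (Fin n) ℂ)
    (hc : ContinuousOn U (Icc 0 T)) (hu : ∀ t ∈ Icc (0 : ℝ) T, IsUnit (U t)) :
    ContinuousOn (fun t => (U t)⁻¹) (Icc 0 T) := by
  intro t ht
  obtain ⟨u, hu'⟩ := hu t ht
  have h1 : ContinuousAt Ring.inverse (U t) := by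
    rw [← hu']
    exact NormedRing.inverse_continuousAt u
  have h2 := h1.comp_continuousWithinAt (hc t ht)
  refine h2.congr (fun x _ => ?_) ?_
  · exact Matrix.nonsing_inv_eq_ringInverse _
  · exact Matrix.nonsing_inv_eq_ringInverse _

theorem intTuple_continuousOn {m n : ℕ} {T : ℝ} (hT : 0 < T)
    (B : Fin m → Fin m → ℝ → Matrix (Fin n) (Fin n) ℂ)
    (U : Fin m → ℝ → Matrix (Fin n) (Fin n) ℂ)
    (hB : ∀ i j : Fin m, i ≤ j → ContinuousOn (B i j) (Icc 0 T))
    (hU : ∀ i, ContinuousOn (U i) (Icc 0 T))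
    (hUinv : ∀ i, ∀ t ∈ Icc (0 : ℝ) T, IsUnit (U i t))
    (l : List (Fin m)) (hl : l.Pairwise (· ≤ ·)) :
    ContinuousOn (intTuple B U l) (Icc 0 T) := by
  cases l with
  | nil => exact continuousOn_const
  | cons i l =>
    refine (hU i).mul (nestedInt_continuousOn hT _ ?_)
    intro M hM
    rw [List.mem_map] at hM
    obtain ⟨p, hp, rfl⟩ := hM
    have hle : p.1 ≤ p.2 := by
      clear * - hl hp
      induction l generalizing i with
      | nil => simp at hp
      | cons k l ih =>
        rw [List.zip_cons_cons, List.mem_cons] at hp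
        rw [List.pairwise_cons] at hl
        rcases hp with rfl | hp
        · exact hl.1 _ (by simp)
        · exact ih k hl.2 hp
    exact ((inv_continuousOn _ (hU _) (hUinv _)).mul (hB _ _ hle)).mul (hU _)

theorem intTuple_cons_cons {m n : ℕ}
    (B : Fin m → Fin m → ℝ → Matrix (Fin n) (Fin n) ℂ)
    (U : Fin m → ℝ → Matrix (Fin n) (Fin n) ℂ) (s k : Fin m) (l : List (Fin m)) (t : ℝ) :
    intTuple B U (s :: k :: l) t =
      U s t * ∫ t₁ in (0 : ℝ)..t, (U s t₁)⁻¹ * B s k t₁ * intTuple B U (k :: l) t₁ := by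
  simp only [intTuple, List.zip_cons_cons, List.map_cons, nestedInt, mul_assoc]

theorem sum_card_eq {m : ℕ} {E : Type*} [AddCommGroup E] (p q : Fin m)
    (f : Finset (Fin m) → E) :
    f ∅ + ∑ r ∈ Finset.Icc 1 ((q : ℕ) - (p : ℕ) - 1),
      ∑ S ∈ Finset.powersetCard r (Finset.Ioo p q), f S =
    ∑ S ∈ (Finset.Ioo p q).powerset, f S := by
  rw [Finset.sum_powerset, Fin.card_Ioo, Finset.sum_range_succ', add_comm]
  congr 1
  · rw [Finset.range_eq_Ico, Finset.sum_Ico_add' (fun r =>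
      ∑ S ∈ Finset.powersetCard r (Finset.Ioo p q), f S)]
    rfl
  · simp

theorem sum_powerset_Ioo {m : ℕ} {E : Type*} [AddCommGroup E] (p q : Fin m)
    (f : Finset (Fin m) → E) :
    ∑ S ∈ (Finset.Ioo p q).powerset, f S =
      f ∅ + ∑ k ∈ Finset.Ioo p q, ∑ S ∈ (Finset.Ioo k q).powerset, f (insert k S) := by
  rw [← Finset.add_sum_erase _ _ (Finset.empty_mem_powerset _), Finset.sum_sigma']
  congr 1
  symm
  refine Finset.sum_bij (fun x _ => insert x.1 x.2) ?_ ?_ ?_ ?_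
  · rintro ⟨k, S⟩ h
    simp only [Finset.mem_sigma, Finset.mem_Ioo, Finset.mem_powerset] at h
    simp only [Finset.mem_erase, Finset.mem_powerset]
    refine ⟨Finset.insert_ne_empty _ _, ?_⟩
    intro x hx
    rcases Finset.mem_insert.1 hx with rfl | hx
    · exact Finset.mem_Ioo.2 h.1
    · have := Finset.mem_Ioo.1 (h.2 hx)
      exact Finset.mem_Ioo.2 ⟨h.1.1.trans this.1, this.2⟩
  · rintro ⟨k, S⟩ h ⟨k', S'⟩ h' e
    simp only [Finset.mem_sigma, Finset.mem_Ioo, Finset.mem_powerset] at h h' e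
    have hk : k ∉ S := fun hx => lt_irrefl _ (Finset.mem_Ioo.1 (h.2 hx)).1
    have hk' : k' ∉ S' := fun hx => lt_irrefl _ (Finset.mem_Ioo.1 (h'.2 hx)).1
    have e1 : k = k' := by
      apply le_antisymm
      · have : k' ∈ insert k S := by rw [e]; simp
        rcases Finset.mem_insert.1 this with h1 | h1
        · exact h1.ge
        · exact (Finset.mem_Ioo.1 (h.2 h1)).1.le
      · have : k ∈ insert k' S' := by rw [← e]; simp
        rcases Finset.mem_insert.1 this with h1 | h1
        · exact h1.ge
        · exact (Finset.mem_Ioo.1 (h'.2 h1)).1.le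
    subst e1
    have e2 : S = S' := by
      rw [← Finset.erase_insert hk, e, Finset.erase_insert hk']
    rw [e2]
  · intro S hS
    simp only [Finset.mem_erase, Finset.mem_powerset] at hS
    have hne := Finset.nonempty_iff_ne_empty.2 hS.1
    refine ⟨⟨S.min' hne, S.erase (S.min' hne)⟩, ?_, ?_⟩
    · simp only [Finset.mem_sigma, Finset.mem_powerset]
      refine ⟨hS.2 (S.min'_mem hne), ?_⟩
      intro x hx
      exact Finset.mem_Ioo.2 ⟨S.min'_lt_of_mem_erase_min' hne hx,
        (Finset.mem_Ioo.1 (hS.2 (Finset.mem_of_mem_erase hx))).2⟩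
    · exact Finset.insert_erase (S.min'_mem hne)
  · intros; rfl

/-- key identity in the proof of Theorem 1. With `U i` the (invertible)
propagator of `B i i`, and `C p q` defined by the explicit sum over strictly increasing
tuples, for all `s < s + j ≤ m` with `j ≥ 2`:
`∑_{r=1}^{j-1} ∑_{s < i₁ < ⋯ < i_r < s+j} Int_{(s,i₁,…,i_r,s+j)}(t)
  = ∑_{i=1}^{j-1} U_s(t) ∫₀ᵗ U_s(t₁)⁻¹ B_{s,s+i}(t₁) C_{s+i,s+j}(t₁) dt₁`. -/
theorem statement11 {m n : ℕ} {T : ℝ} (hT : 0 < T)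
    (B : Fin m → Fin m → ℝ → Matrix (Fin n) (Fin n) ℂ)
    (U : Fin m → ℝ → Matrix (Fin n) (Fin n) ℂ)
    (C : Fin m → Fin m → ℝ → Matrix (Fin n) (Fin n) ℂ)
    (hB : ∀ i j : Fin m, i ≤ j → ContinuousOn (B i j) (Icc 0 T))
    (hU0 : ∀ i, U i 0 = 1)
    (hU : ∀ i, ∀ t ∈ Icc (0 : ℝ) T,
      HasDerivWithinAt (U i) (B i i t * U i t) (Icc 0 T) t)
    (hUinv : ∀ i, ∀ t ∈ Icc (0 : ℝ) T, IsUnit (U i t))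
    (hC : ∀ p q : Fin m, p < q → ∀ t : ℝ,
      C p q t =
        intTuple B U [p, q] t +
        ∑ r ∈ Finset.Icc 1 ((q : ℕ) - (p : ℕ) - 1),
          ∑ S ∈ Finset.powersetCard r (Finset.Ioo p q),
            intTuple B U (p :: (S.sort (· ≤ ·) ++ [q])) t) :
    ∀ s q : Fin m, s < q → 2 ≤ (q : ℕ) - (s : ℕ) → ∀ t ∈ Icc (0 : ℝ) T,
      ∑ r ∈ Finset.Icc 1 ((q : ℕ) - (s : ℕ) - 1),
        ∑ S ∈ Finset.powersetCard r (Finset.Ioo s q),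
          intTuple B U (s :: (S.sort (· ≤ ·) ++ [q])) t =
      ∑ k ∈ Finset.Ioo s q,
        U s t * ∫ t₁ in (0 : ℝ)..t, (U s t₁)⁻¹ * B s k t₁ * C k q t₁ := by
  intro s q hsq _ t ht
  have hUc : ∀ i, ContinuousOn (U i) (Icc 0 T) := fun i x hx => (hU i x hx).continuousWithinAt
  have hC' : ∀ k : Fin m, k < q → ∀ x : ℝ, C k q x =
      ∑ S ∈ (Finset.Ioo k q).powerset, intTuple B U (k :: (S.sort (· ≤ ·) ++ [q])) x := by
    intro k hk x
    rw [hC k q hk x, ← sum_card_eq]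
    simp
  have h1 := (sum_card_eq s q fun S => intTuple B U (s :: (S.sort (· ≤ ·) ++ [q])) t).trans
    (sum_powerset_Ioo s q fun S => intTuple B U (s :: (S.sort (· ≤ ·) ++ [q])) t)
  rw [add_left_cancel h1]
  refine Finset.sum_congr rfl fun k hk => ?_
  have hk' := Finset.mem_Ioo.1 hk
  have h2 : ∀ S ∈ (Finset.Ioo k q).powerset,
      intTuple B U (s :: ((insert k S).sort (· ≤ ·) ++ [q])) t =
      U s t * ∫ t₁ in (0 : ℝ)..t, (U s t₁)⁻¹ * B s k t₁ *
        intTuple B U (k :: (S.sort (· ≤ ·) ++ [q])) t₁ := by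
    intro S hS
    rw [Finset.mem_powerset] at hS
    rw [Finset.sort_insert (r := (· ≤ ·)) (fun b hb => (Finset.mem_Ioo.1 (hS hb)).1.le)
      (fun hx => lt_irrefl _ (Finset.mem_Ioo.1 (hS hx)).1), List.cons_append,
      intTuple_cons_cons]
  rw [Finset.sum_congr rfl h2, ← Finset.mul_sum, ← intervalIntegral.integral_finsetSum]
  · congr 1
    refine intervalIntegral.integral_congr fun x _ => ?_
    simp only [hC' k hk'.2 x, Finset.mul_sum]
  · intro S hS
    rw [Finset.mem_powerset] at hS
    apply ContinuousOn.intervalIntegrable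
    rw [Set.uIcc_of_le ht.1]
    refine ContinuousOn.mono ?_ (Set.Icc_subset_Icc_right ht.2)
    refine ((inv_continuousOn _ (hUc _) (hUinv _)).mul (hB _ _ hk'.1.le)).mul
      (intTuple_continuousOn hT B U hB hUc hUinv _ ?_)
    rw [List.pairwise_cons, List.pairwise_append]
    refine ⟨?_, Finset.pairwise_sort S _, by simp, ?_⟩
    · intro b hb
      rcases List.mem_append.1 hb with hb | hb
      · exact (Finset.mem_Ioo.1 (hS ((Finset.mem_sort _).1 hb))).1.le
      · rw [List.mem_singleton.1 hb]; exact hk'.2.le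
    · intro a ha b hb
      rw [List.mem_singleton.1 hb]
      exact (Finset.mem_Ioo.1 (hS ((Finset.mem_sort _).1 ha))).2.le
end

section
/- Let G, A₁, …, A_m : [0,T] → Mₙ(ℂ) be continuous, let U be the propagator of G (U(0) = I, U'(t) = G(t)·U(t), U(t) invertible for every t), and for 1 ≤ i ≤ j ≤ m define the Dyson term 𝒟_U(A_i,…,A_j)(t) = U(t)·∫₀ᵗ dt₁ ∫₀^{t₁} dt₂ ⋯ ∫₀^{t_{j−i}} dt_{j−i+1} Ã_i(t₁)·Ã_{i+1}(t₂) ⋯ Ã_j(t_{j−i+1}), where Ã_k(s) = U(s)⁻¹·A_k(s)·U(s). Let L : [0,T] → M_{(m+1)n}(ℂ) be the block matrix whose (m+1)×(m+1) blocks are: all diagonal blocks equal to G(t), the k-th block on the first superdiagonal equal to A_k(t) for 1 ≤ k ≤ m, and all other blocks zero. Then the unique V : [0,T] → M_{(m+1)n}(ℂ) with V(0) = I and V'(t) = L(t)·V(t) is block upper triangular with all diagonal blocks equal to U(t) and, for 1 ≤ i < j ≤ m+1, with (i,j) block equal to 𝒟_U(A_i, A_{i+1}, …, A_{j−1})(t).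 -/
open MeasureTheory Set intervalIntegral

attribute [local instance] Matrix.linftyOpNormedAddCommGroup Matrix.linftyOpNormedRing
  Matrix.linftyOpNormedAlgebra

theorem aux_deriv {R : Type*} [NormedRing R] [NormedAlgebra ℝ R] [CompleteSpace R] {T : ℝ}
    (G U W F : ℝ → R)
    (hU : ∀ t ∈ Icc (0 : ℝ) T, HasDerivWithinAt U (G t * U t) (Icc 0 T) t)
    (hUinv : ∀ t ∈ Icc (0 : ℝ) T, IsUnit (U t))
    (hW : ∀ t ∈ Icc (0 : ℝ) T, HasDerivWithinAt W (G t * W t + F t) (Icc 0 T) t) :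
    ∀ t ∈ Icc (0 : ℝ) T, HasDerivWithinAt (fun s => Ring.inverse (U s) * W s)
      (Ring.inverse (U t) * F t) (Icc 0 T) t := by
  intro t ht
  obtain ⟨u, hu⟩ := hUinv t ht
  have h1 := hasFDerivAt_ringInverse (𝕜 := ℝ) u
  rw [hu] at h1
  have h2 := (h1.comp_hasDerivWithinAt t (hU t ht)).mul (hW t ht)
  refine h2.congr_deriv ?_
  simp only [Function.comp, ← hu, Ring.inverse_unit]
  simp [mul_add, mul_assoc]

theorem aux_int {R : Type*} [NormedRing R] [NormedAlgebra ℝ R] [CompleteSpace R] {T : ℝ}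
    (G U W F : ℝ → R) (hU0 : U 0 = 1)
    (hU : ∀ t ∈ Icc (0 : ℝ) T, HasDerivWithinAt U (G t * U t) (Icc 0 T) t)
    (hUinv : ∀ t ∈ Icc (0 : ℝ) T, IsUnit (U t))
    (hW : ∀ t ∈ Icc (0 : ℝ) T, HasDerivWithinAt W (G t * W t + F t) (Icc 0 T) t)
    (hF : ContinuousOn F (Icc 0 T)) :
    ∀ t ∈ Icc (0 : ℝ) T, W t = U t * (W 0 + ∫ s in (0 : ℝ)..t, Ring.inverse (U s) * F s) := by
  intro t ht
  have hd := aux_deriv G U W F hU hUinv hW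
  have hsub : Icc 0 t ⊆ Icc 0 T := Icc_subset_Icc_right ht.2
  have hUc : ContinuousOn U (Icc 0 T) := fun s hs => (hU s hs).continuousWithinAt
  have hinv : ContinuousOn (fun s => Ring.inverse (U s)) (Icc 0 T) := by
    intro s hs
    obtain ⟨u, hu⟩ := hUinv s hs
    have h1 := NormedRing.inverse_continuousAt u
    rw [hu] at h1
    exact h1.comp_continuousWithinAt (hUc s hs)
  have key := integral_eq_sub_of_hasDerivAt_of_le (a := 0) (b := t)
    (f := fun s => Ring.inverse (U s) * W s) (f' := fun s => Ring.inverse (U s) * F s) ht.1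
    (fun s hs => ((hd s (hsub hs)).continuousWithinAt.mono hsub))
    (fun s hs => (hd s (hsub (Ioo_subset_Icc_self hs))).hasDerivAt
      (Icc_mem_nhds hs.1 (hs.2.trans_le ht.2)))
    (ContinuousOn.intervalIntegrable (by
      rw [uIcc_of_le ht.1]; exact (hinv.mul hF).mono hsub))
  rw [key]
  simp only [hU0, Ring.inverse_one, one_mul, add_sub_cancel]
  rw [← mul_assoc, Ring.mul_inverse_cancel _ (hUinv t ht), one_mul]

/-- extraction of a block as a linear map -/
def blk {n m : ℕ} (i j : Fin (m + 1)) :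
    Matrix (Fin (m + 1) × Fin n) (Fin (m + 1) × Fin n) ℂ →ₗ[ℝ] Matrix (Fin n) (Fin n) ℂ where
  toFun M := Matrix.of fun a b => M (i, a) (j, b)
  map_add' _ _ := rfl
  map_smul' _ _ := rfl

theorem blk_apply {n m : ℕ} (i j : Fin (m + 1))
    (M : Matrix (Fin (m + 1) × Fin n) (Fin (m + 1) × Fin n) ℂ) (a b : Fin n) :
    blk i j M a b = M (i, a) (j, b) := rfl

theorem blk_mul {n m : ℕ} (M N : Matrix (Fin (m + 1) × Fin n) (Fin (m + 1) × Fin n) ℂ)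
    (i j : Fin (m + 1)) : blk i j (M * N) = ∑ k, blk i k M * blk k j N := by
  ext a b
  rw [Matrix.sum_apply]
  simp [blk_apply, Matrix.mul_apply, Fintype.sum_prod_type]

theorem blk_deriv {n m : ℕ} {T : ℝ}
    (V V' : ℝ → Matrix (Fin (m + 1) × Fin n) (Fin (m + 1) × Fin n) ℂ)
    (hV : ∀ t ∈ Icc (0 : ℝ) T, HasDerivWithinAt V (V' t) (Icc 0 T) t) (i j : Fin (m + 1)) :
    ∀ t ∈ Icc (0 : ℝ) T, HasDerivWithinAt (fun s => blk i j (V s)) (blk i j (V' t)) (Icc 0 T) t := by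
  intro t ht
  exact (LinearMap.toContinuousLinearMap (blk (n := n) i j)).hasFDerivAt.comp_hasDerivWithinAt t
    (hV t ht)

/-- the `f = 1` construction. Let `U` be the propagator of `G` and let
`L` be the `(m+1) × (m+1)`-block generator with every diagonal block `G t` and `k`-th
first-superdiagonal block `A k t` (`k = 1, …, m`, so the 0-indexed block `(i, i+1)` is
`A (i+1)`). If `V` solves `V' = L V`, `V 0 = 1`, then `V` is block upper triangular, each
diagonal block equals `U t`, and for `i < j` the `(i,j)` block is the Dyson term
`𝒟_U(A_{i+1}, …, A_j)(t)` (0-indexed blocks). -/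
theorem statement12 {n m : ℕ} {T : ℝ} (hT : 0 < T)
    (G : ℝ → Matrix (Fin n) (Fin n) ℂ) (A : ℕ → ℝ → Matrix (Fin n) (Fin n) ℂ)
    (U : ℝ → Matrix (Fin n) (Fin n) ℂ)
    (hG : ContinuousOn G (Icc 0 T))
    (hA : ∀ k, 1 ≤ k → k ≤ m → ContinuousOn (A k) (Icc 0 T))
    (hU0 : U 0 = 1)
    (hU : ∀ t ∈ Icc (0 : ℝ) T, HasDerivWithinAt U (G t * U t) (Icc 0 T) t)
    (hUinv : ∀ t ∈ Icc (0 : ℝ) T, IsUnit (U t))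
    (L V : ℝ → Matrix (Fin (m + 1) × Fin n) (Fin (m + 1) × Fin n) ℂ)
    (hL : ∀ (t : ℝ) (i j : Fin (m + 1)) (a b : Fin n),
      L t (i, a) (j, b) =
        if i = j then G t a b
        else if (j : ℕ) = (i : ℕ) + 1 then A ((i : ℕ) + 1) t a b
        else 0)
    (hV0 : V 0 = 1)
    (hV : ∀ t ∈ Icc (0 : ℝ) T, HasDerivWithinAt V (L t * V t) (Icc 0 T) t) :
    ∀ t ∈ Icc (0 : ℝ) T, ∀ i j : Fin (m + 1),
      (j < i → (Matrix.of fun a b => V t (i, a) (j, b)) = 0) ∧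
      (i = j → (Matrix.of fun a b => V t (i, a) (j, b)) = U t) ∧
      (i < j → (Matrix.of fun a b => V t (i, a) (j, b)) =
        U t * nestedInt
          ((List.range' ((i : ℕ) + 1) ((j : ℕ) - (i : ℕ))).map
            fun k => fun τ => (U τ)⁻¹ * A k τ * U τ) t) := by
  
  classical
  have hB := fun i j => blk_deriv V _ hV i j
  have hBc : ∀ i j, ContinuousOn (fun s => blk i j (V s)) (Icc 0 T) :=
    fun i j s hs => (hB i j s hs).continuousWithinAt
  have hB0 : ∀ i j, blk i j (V 0) = if i = j then 1 else 0 := by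
    intro i j
    rw [hV0]
    ext a b
    by_cases h : i = j <;> simp [blk_apply, Matrix.one_apply, h]
  have hLb : ∀ t i k, blk i k (L t) = if i = k then G t
      else if (k : ℕ) = (i : ℕ) + 1 then A ((i : ℕ) + 1) t else 0 := by
    intro t i k
    ext a b
    simp only [blk_apply, hL]
    split_ifs <;> rfl
  -- last block row
  have hlast : ∀ t ∈ Icc (0 : ℝ) T, ∀ i j : Fin (m + 1), (i : ℕ) = m →
      blk i j (V t) = U t * (if i = j then 1 else 0) := by
    intro t ht i j him
    have := aux_int G U (fun s => blk i j (V s)) (fun _ => 0) hU0 hU hUinv (by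
      intro s hs
      refine (hB i j s hs).congr_deriv ?_
      rw [blk_mul, Finset.sum_eq_single i]
      · simp [hLb]
      · intro k _ hk
        have : ¬ ((k : ℕ) = (i : ℕ) + 1) := by omega
        simp [hLb, this, Ne.symm hk]
      · simp) continuousOn_const t ht
    simpa [hB0] using this
  have hstep : ∀ t ∈ Icc (0 : ℝ) T, ∀ i i' j : Fin (m + 1), (i' : ℕ) = i + 1 →
      blk i j (V t) = U t * ((if i = j then 1 else 0) +
        ∫ s in (0 : ℝ)..t, (U s)⁻¹ * (A (i + 1) s * blk i' j (V s))) := by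
    intro t ht i i' j hii
    have := aux_int G U (fun s => blk i j (V s)) (fun s => A (i + 1) s * blk i' j (V s))
      hU0 hU hUinv (by
      intro s hs
      refine (hB i j s hs).congr_deriv ?_
      have hne : i ≠ i' := by intro h; rw [h] at hii; omega
      rw [blk_mul, Finset.sum_eq_add i i' hne]
      · simp [hLb, hne, hii]
      · intro k _ hk
        have : ¬ ((k : ℕ) = (i : ℕ) + 1) := by
          intro h; exact hk.2 (Fin.ext (by omega))
        simp [hLb, this, Ne.symm hk.1]
      · simp
      · simp) ((hA _ (by omega) (by omega)).mul (hBc i' j)) t ht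
    simpa only [hB0, ← Matrix.nonsing_inv_eq_ringInverse] using this
  have main : ∀ d : ℕ, ∀ i : Fin (m + 1), (i : ℕ) + d = m → ∀ j : Fin (m + 1),
      ∀ t ∈ Icc (0 : ℝ) T,
      (j < i → blk i j (V t) = 0) ∧ (i = j → blk i j (V t) = U t) ∧
      (i < j → blk i j (V t) = U t * nestedInt
          ((List.range' ((i : ℕ) + 1) ((j : ℕ) - (i : ℕ))).map
            fun k => fun τ => (U τ)⁻¹ * A k τ * U τ) t) := by
    intro d
    induction d with
    | zero =>
      intro i hi j t ht
      have h := hlast t ht i j (by omega)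
      refine ⟨fun hj => ?_, fun hj => ?_, fun hj => ?_⟩
      · rw [h, if_neg hj.ne', mul_zero]
      · rw [h, if_pos hj, mul_one]
      · exfalso
        have := Fin.lt_def.1 hj
        omega
    | succ d ih =>
      intro i hi j t ht
      have hlt : (i : ℕ) + 1 < m + 1 := by omega
      have h := hstep t ht i ⟨i + 1, hlt⟩ j rfl
      have ih' := ih ⟨i + 1, hlt⟩ (by simp only; omega) j
      have hsub : uIcc 0 t ⊆ Icc 0 T := by
        rw [uIcc_of_le ht.1]; exact Icc_subset_Icc_right ht.2
      have hz : j ≤ i → (∫ s in (0 : ℝ)..t,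
          (U s)⁻¹ * (A (i + 1) s * blk ⟨i + 1, hlt⟩ j (V s))) = 0 := by
        intro hj
        rw [integral_congr (g := fun _ => 0)]
        · simp
        · intro s hs
          have := (ih' s (hsub hs)).1 (by
            rw [Fin.lt_def]; have := Fin.le_def.1 hj; simp only; omega)
          simp only [this, mul_zero]
      refine ⟨fun hj => ?_, fun hj => ?_, fun hj => ?_⟩
      · rw [h, hz hj.le, if_neg hj.ne', add_zero, mul_zero]
      · rw [h, hz hj.ge, if_pos hj, add_zero, mul_one]
      · have hj' := Fin.lt_def.1 hj
        rw [h, if_neg hj.ne, zero_add]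
        congr 1
        have e : (j : ℕ) - i = (j - (i + 1)) + 1 := by omega
        rw [e, List.range'_succ, List.map_cons, nestedInt]
        refine integral_congr fun s hs => ?_
        have := ih' s (hsub hs)
        by_cases hji : (j : ℕ) = i + 1
        · rw [this.2.1 (Fin.ext hji.symm), hji]
          simp [nestedInt, mul_assoc]
        · rw [this.2.2 (by rw [Fin.lt_def]; simp only; omega)]
          simp only [mul_assoc]
  intro t ht i j
  exact main (m - i) i (by omega) j t ht
end
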